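/- arXiv:2011.11502 — 2 statements merged into one kernel-verified Lean document; each statement's English description precedes it below -/
import Mathlib

section
/- Caputo fractional derivative of the cosine function: for real α with 0 < α < 1, real c, real a, and every x > a, (1/Γ(1-α)) ∫_a^x (x-t)^{-α} ( -c sin(c(t-a)) ) dt = -c² (x-a)^{2-α} E_{2,3-α}( -c² (x-a)² ). -/
/-!
The Riemann–Liouville integral of order `β` sends `(t - a) ^ (γ - 1)` to
`Γ(γ) / Γ(β + γ) * (x - a) ^ (β + γ - 1)`, by Euler's Beta integral. Applied to each term of the
Mittag-Leffler series, the factor `Γ(γ + δ k)` cancels and only the second parameter changes, from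
`γ` to `β + γ`. The derivative of `cos (c (t - a))` is `-c² (t - a) E_{2,2}(-c² (t - a)²)`, and the
Caputo derivative of order `α` is its Riemann–Liouville integral of order `1 - α`.
-/

open MeasureTheory Real

/-- The two-parameter Mittag-Leffler function `E_{α,β}(t) = Σ_k t^k / Γ(αk+β)`. -/
noncomputable def mittagLeffler (α β t : ℝ) : ℝ :=
  ∑' k : ℕ, t ^ k / Real.Gamma (α * k + β)

open Filter Set

lemma sub_one_rpow_mul_Gamma_le_Gamma_add {z δ : ℝ} (hz : 1 < z) (hδ : 0 < δ) :
    (z - 1) ^ δ * Gamma z ≤ Gamma (z + δ) := by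
  have hz₁ : 0 < z - 1 := sub_pos.2 hz
  have hΓ₁ : 0 < Gamma (z - 1) := Gamma_pos_of_pos hz₁
  have hΓz : 0 < Gamma z := Gamma_pos_of_pos (by linarith)
  have hΓδ : 0 < Gamma (z + δ) := Gamma_pos_of_pos (by linarith)
  have hrec : log (Gamma z) = log (z - 1) + log (Gamma (z - 1)) := by
    rw [← log_mul hz₁.ne' hΓ₁.ne', ← Gamma_add_one hz₁.ne', sub_add_cancel]
  -- By log-convexity, the slope over `[z - 1, z]` is at most the slope over `[z, z + δ]`.
  have hslope : log (z - 1) ≤ (log (Gamma (z + δ)) - log (Gamma z)) / δ := by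
    have h := convexOn_log_Gamma.slope_mono_adjacent (mem_Ioi.2 hz₁)
      (mem_Ioi.2 (by linarith : 0 < z + δ)) (sub_one_lt z) (lt_add_of_pos_right z hδ)
    simpa [hrec] using h
  rw [← log_le_log_iff (by positivity) hΓδ, log_mul (by positivity) hΓz.ne', log_rpow hz₁]
  linarith [(le_div_iff₀ hδ).1 hslope]

lemma summable_mittagLeffler {δ : ℝ} (hδ : 0 < δ) (γ t : ℝ) :
    Summable fun k : ℕ => t ^ k / Gamma (δ * k + γ) := by
  have harg : Tendsto (fun k : ℕ => δ * k + γ - 1) atTop atTop :=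
    tendsto_atTop_add_const_right _ _ <| tendsto_atTop_add_const_right _ _ <|
      tendsto_natCast_atTop_atTop.const_mul_atTop hδ
  refine summable_of_ratio_norm_eventually_le (r := 1 / 2) (by norm_num) ?_
  filter_upwards [harg.eventually_gt_atTop 0,
    ((tendsto_rpow_atTop hδ).comp harg).eventually_ge_atTop (2 * |t|)] with k hk hkt
  have hΓ : 0 < Gamma (δ * k + γ) := Gamma_pos_of_pos (by linarith)
  have hΓ' : 0 < Gamma (δ * k + γ + δ) := Gamma_pos_of_pos (by linarith)
  have hgrowth : 2 * |t| * Gamma (δ * k + γ) ≤ Gamma (δ * k + γ + δ) :=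
    (mul_le_mul_of_nonneg_right hkt hΓ.le).trans
      (sub_one_rpow_mul_Gamma_le_Gamma_add (sub_pos.1 hk) hδ)
  have hshift : δ * ((k + 1 : ℕ) : ℝ) + γ = δ * k + γ + δ := by push_cast; ring
  rw [hshift, norm_div, norm_div, norm_pow, norm_pow, norm_eq_abs, norm_of_nonneg hΓ.le,
    norm_of_nonneg hΓ'.le, div_mul_div_comm, one_mul, div_le_div_iff₀ hΓ' (by positivity)]
  calc |t| ^ (k + 1) * (2 * Gamma (δ * k + γ))
      = |t| ^ k * (2 * |t| * Gamma (δ * k + γ)) := by ring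
    _ ≤ |t| ^ k * Gamma (δ * k + γ + δ) := by gcongr

lemma sin_eq_mul_mittagLeffler (s : ℝ) : sin s = s * mittagLeffler 2 2 (-s ^ 2) := by
  rw [← (hasSum_sin s).tsum_eq, mittagLeffler, ← tsum_mul_left]
  refine tsum_congr fun k => ?_
  have hΓ : Gamma (2 * k + 2) = (2 * k + 1).factorial := by
    rw [← Gamma_nat_eq_factorial]
    congr 1
    push_cast
    ring
  rw [hΓ, neg_pow (s ^ 2), ← pow_mul, pow_succ]
  ring

lemma hasSum_integral_smul_of_summable_bound {ι E : Type*} [Countable ι] [NormedAddCommGroup E]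
    [NormedSpace ℝ E] {μ : Measure ℝ} {a b : ℝ} {w : ℝ → ℝ} {f : ι → ℝ → E} {g : ℝ → E}
    {u : ι → ℝ} (hw : IntervalIntegrable w μ a b)
    (hf : ∀ i, AEStronglyMeasurable (f i) (μ.restrict (uIoc a b))) (hu : Summable u)
    (hfu : ∀ i, ∀ t ∈ uIoc a b, ‖f i t‖ ≤ u i)
    (hfg : ∀ t ∈ uIoc a b, HasSum (fun i => f i t) (g t)) :
    HasSum (fun i => ∫ t in a..b, w t • f i t ∂μ) (∫ t in a..b, w t • g t ∂μ) := by
  refine intervalIntegral.hasSum_integral_of_dominated_convergence (fun i t => ‖w t‖ * u i)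
    (fun i => hw.def'.aestronglyMeasurable.smul (hf i))
    (fun i => ae_of_all _ fun t ht => ?_)
    (ae_of_all _ fun t _ => hu.mul_left _) ?_
    (ae_of_all _ fun t ht => (hfg t ht).const_smul _)
  · rw [norm_smul]
    exact mul_le_mul_of_nonneg_left (hfu i t ht) (norm_nonneg _)
  · simpa only [tsum_mul_left] using hw.norm.mul_const _

section RiemannLiouville

variable {β γ δ a x : ℝ}

lemma integral_sub_rpow_mul_rpow {L : ℝ} (hβ : 0 < β) (hγ : 0 < γ) (hL : 0 < L) :
    ∫ s in (0 : ℝ)..L, (L - s) ^ (β - 1) * s ^ (γ - 1)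
      = Gamma β * Gamma γ / Gamma (β + γ) * L ^ (β + γ - 1) := by
  have hcast : EqOn (fun s : ℝ => (((L - s) ^ (β - 1) * s ^ (γ - 1) : ℝ) : ℂ))
      (fun s : ℝ => (s : ℂ) ^ ((γ : ℂ) - 1) * ((L : ℂ) - s) ^ ((β : ℂ) - 1)) (uIcc 0 L) := by
    intro s hs
    rw [uIcc_of_le hL.le] at hs
    push_cast [Complex.ofReal_cpow hs.1, Complex.ofReal_cpow (sub_nonneg.2 hs.2)]
    exact mul_comm _ _
  apply Complex.ofReal_injective
  rw [← intervalIntegral.integral_ofReal, intervalIntegral.integral_congr hcast,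
    Complex.betaIntegral_scaled _ _ hL, Complex.betaIntegral_eq_Gamma_mul_div _ _
      (by simpa using hγ) (by simpa using hβ)]
  push_cast [Complex.ofReal_cpow hL.le, ← Complex.Gamma_ofReal]
  ring_nf

lemma integral_sub_rpow_mul_sub_rpow (hβ : 0 < β) (hγ : 0 < γ) (hx : a < x) :
    ∫ t in a..x, (x - t) ^ (β - 1) * (t - a) ^ (γ - 1)
      = Gamma β * Gamma γ / Gamma (β + γ) * (x - a) ^ (β + γ - 1) := by
  rw [← integral_sub_rpow_mul_rpow hβ hγ (sub_pos.2 hx)]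
  simpa using intervalIntegral.integral_comp_sub_right (a := a) (b := x)
    (fun s => (x - a - s) ^ (β - 1) * s ^ (γ - 1)) a

lemma intervalIntegrable_sub_rpow_mul_sub_rpow (hβ : 0 < β) (hγ : 0 < γ) (hx : a < x) :
    IntervalIntegrable (fun t => (x - t) ^ (β - 1) * (t - a) ^ (γ - 1)) volume a x := by
  -- A non-integrable function would have integral `0`.
  by_contra h
  have hzero := intervalIntegral.integral_undef h
  rw [integral_sub_rpow_mul_sub_rpow hβ hγ hx] at hzero
  have hpos : 0 < Gamma β * Gamma γ / Gamma (β + γ) * (x - a) ^ (β + γ - 1) :=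
    mul_pos (by positivity) (rpow_pos_of_pos (sub_pos.2 hx) _)
  exact hpos.ne' hzero

/-- The Riemann–Liouville fractional integral `(1/Γ(β)) ∫_a^x (x-t)^{β-1} f(t) dt` of order `β` and
base point `a`. The Caputo derivative of order `α` is the integral of order `1 - α` of the ordinary
derivative. -/
noncomputable def riemannLiouvilleIntegral (β a : ℝ) (f : ℝ → ℝ) (x : ℝ) : ℝ :=
  1 / Gamma β * ∫ t in a..x, (x - t) ^ (β - 1) * f t

lemma riemannLiouvilleIntegral_congr {f g : ℝ → ℝ} (hfg : EqOn f g (uIoc a x)) :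
    riemannLiouvilleIntegral β a f x = riemannLiouvilleIntegral β a g x := by
  rw [riemannLiouvilleIntegral, riemannLiouvilleIntegral, intervalIntegral.integral_congr_ae
    (ae_of_all _ fun t ht => by rw [hfg ht])]

lemma riemannLiouvilleIntegral_const_mul (c : ℝ) (f : ℝ → ℝ) :
    riemannLiouvilleIntegral β a (fun t => c * f t) x = c * riemannLiouvilleIntegral β a f x := by
  simp only [riemannLiouvilleIntegral, mul_left_comm _ c, intervalIntegral.integral_const_mul]

lemma riemannLiouvilleIntegral_sub_rpow (hβ : 0 < β) (hγ : 0 < γ) (hx : a < x) :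
    riemannLiouvilleIntegral β a (fun t => (t - a) ^ (γ - 1)) x
      = Gamma γ / Gamma (β + γ) * (x - a) ^ (β + γ - 1) := by
  have hΓβ := (Gamma_pos_of_pos hβ).ne'
  rw [riemannLiouvilleIntegral, integral_sub_rpow_mul_sub_rpow hβ hγ hx]
  field_simp

lemma hasSum_riemannLiouvilleIntegral_mittagLeffler (hβ : 0 < β) (hγ : 0 < γ) (hδ : 0 < δ)
    (hx : a < x) (c : ℝ) :
    HasSum (fun k : ℕ => riemannLiouvilleIntegral β a
        (fun t => (t - a) ^ (γ - 1) * ((c * (t - a) ^ δ) ^ k / Gamma (δ * k + γ))) x)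
      (riemannLiouvilleIntegral β a
        (fun t => (t - a) ^ (γ - 1) * mittagLeffler δ γ (c * (t - a) ^ δ)) x) := by
  simp only [riemannLiouvilleIntegral, ← mul_assoc ((x - _) ^ (β - 1))]
  refine (hasSum_integral_smul_of_summable_bound
    (intervalIntegrable_sub_rpow_mul_sub_rpow hβ hγ hx)
    (fun k => Measurable.aestronglyMeasurable (by fun_prop))
    (summable_mittagLeffler hδ γ (|c| * (x - a) ^ δ)) (fun k t ht => ?_)
    (fun t _ => (summable_mittagLeffler hδ γ _).hasSum)).mul_left _
  rw [uIoc_of_le hx.le] at ht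
  have hta : 0 ≤ t - a := sub_nonneg.2 ht.1.le
  have hΓ : 0 < Gamma (δ * k + γ) := Gamma_pos_of_pos (by positivity)
  rw [norm_div, norm_pow, norm_mul, norm_eq_abs c, norm_of_nonneg (rpow_nonneg hta δ),
    norm_of_nonneg hΓ.le]
  gcongr
  exact ht.2

lemma riemannLiouvilleIntegral_mittagLeffler (hβ : 0 < β) (hγ : 0 < γ) (hδ : 0 < δ)
    (hx : a < x) (c : ℝ) :
    riemannLiouvilleIntegral β a
        (fun t => (t - a) ^ (γ - 1) * mittagLeffler δ γ (c * (t - a) ^ δ)) x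
      = (x - a) ^ (β + γ - 1) * mittagLeffler δ (β + γ) (c * (x - a) ^ δ) := by
  rw [← (hasSum_riemannLiouvilleIntegral_mittagLeffler hβ hγ hδ hx c).tsum_eq, mittagLeffler,
    ← tsum_mul_left]
  refine tsum_congr fun k => ?_
  have hγk : 0 < δ * k + γ := by positivity
  have hΓ : Gamma (δ * k + γ) ≠ 0 := (Gamma_pos_of_pos hγk).ne'
  have hpow {y : ℝ} (hy : 0 < y) (r : ℝ) : y ^ (r + δ * k) = y ^ r * (y ^ δ) ^ k := by
    rw [rpow_add hy, rpow_mul_natCast hy.le]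
  have hterm : EqOn
      (fun t => (t - a) ^ (γ - 1) * ((c * (t - a) ^ δ) ^ k / Gamma (δ * k + γ)))
      (fun t => c ^ k / Gamma (δ * k + γ) * (t - a) ^ (δ * k + γ - 1)) (uIoc a x) := by
    intro t ht
    rw [uIoc_of_le hx.le] at ht
    have hexp : δ * k + γ - 1 = γ - 1 + δ * k := by ring
    simp only [hexp, hpow (sub_pos.2 ht.1)]
    ring
  have hexp : β + (δ * k + γ) - 1 = β + γ - 1 + δ * k := by ring
  rw [riemannLiouvilleIntegral_congr hterm, riemannLiouvilleIntegral_const_mul,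
    riemannLiouvilleIntegral_sub_rpow hβ hγk hx, hexp, hpow (sub_pos.2 hx), add_left_comm β,
    mul_pow]
  field_simp

end RiemannLiouville

theorem caputo_deriv_cos_general
    (α c a : ℝ) (hα1 : α < 1) (x : ℝ) (hx : a < x) :
    (1 / Real.Gamma (1 - α)) *
        ∫ t in a..x, (x - t) ^ (-α) * (-c * Real.sin (c * (t - a)))
      = -c ^ 2 * (x - a) ^ (2 - α) * mittagLeffler 2 (3 - α) (-c ^ 2 * (x - a) ^ 2) := by
  have hsin (t : ℝ) : -c * sin (c * (t - a)) = -c ^ 2 *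
      ((t - a) ^ ((2 : ℝ) - 1) * mittagLeffler 2 2 (-c ^ 2 * (t - a) ^ (2 : ℝ))) := by
    rw [sin_eq_mul_mittagLeffler, rpow_two, show (2 : ℝ) - 1 = 1 by norm_num, rpow_one]
    ring_nf
  calc _ = riemannLiouvilleIntegral (1 - α) a (fun t => -c * sin (c * (t - a))) x := by
        simp only [riemannLiouvilleIntegral, sub_sub_cancel_left]
    _ = -c ^ 2 * ((x - a) ^ (1 - α + 2 - 1)
          * mittagLeffler 2 (1 - α + 2) (-c ^ 2 * (x - a) ^ (2 : ℝ))) := by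
        simp only [hsin]
        rw [riemannLiouvilleIntegral_const_mul, riemannLiouvilleIntegral_mittagLeffler
          (sub_pos.2 hα1) two_pos two_pos hx]
    _ = _ := by
        rw [rpow_two, ← mul_assoc]
        ring_nf

/-- Caputo fractional derivative of the cosine function: for `0 < α < 1` and
`x > a`, `(1/Γ(1-α)) ∫_a^x (x-t)^{-α} ( -c sin(c(t-a)) ) dt
  = -c² (x-a)^{2-α} E_{2,3-α}( -c² (x-a)² )`. -/
theorem caputo_deriv_cos
    (α c a : ℝ) (hα0 : 0 < α) (hα1 : α < 1) (x : ℝ) (hx : a < x) :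
    (1 / Real.Gamma (1 - α)) *
        ∫ t in a..x, (x - t) ^ (-α) * (-c * Real.sin (c * (t - a)))
      = -c ^ 2 * (x - a) ^ (2 - α) * mittagLeffler 2 (3 - α) (-c ^ 2 * (x - a) ^ 2) :=
  caputo_deriv_cos_general α c a hα1 x hx
end

section
/- Solution of the fractional free-fall equation with air resistance: let 0 < α < 1, g > 0, b > 0, m > 0, v₀ be reals, and define v(t) = g t^α E_{α,α+1}( -(b/m) t^α ) + v₀ E_α( -(b/m) t^α ) for t > 0, with v(0) = v₀. Then v is differentiable on (0,∞) and satisfies the Caputo fractional differential equation m · (1/Γ(1-α)) ∫_0^t (t-u)^{-α} v'(u) du = m g − b v(t) for every t > 0. -/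
/-!
The functions `K_β(t) = t^(β-1) E_{α,β}(c t^α)`, `c = -b/m`, form a scale on which the fractional
calculus acts by shifting `β`: differentiation sends `K_β` to `K_{β-1}`, the Riemann–Liouville
integral of order `μ` sends it to `K_{β+μ}`, and splitting off the first term of the series gives
`K_β(t) = t^(β-1) / Γ(β) + c K_{α+β}(t)`. Now `v = g K_{α+1} + v₀ K_1`, so
`v' = g K_α + v₀ K_0 = (g + c v₀) K_α`, whose fractional integral of order `1 - α` is
`(g + c v₀) K_1 = g + c v`.
-/

open MeasureTheory Real

section Gamma

lemma inv_Gamma_eq_mul_inv_Gamma_add_one (s : ℝ) : (Gamma s)⁻¹ = s * (Gamma (s + 1))⁻¹ := by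
  rcases eq_or_ne s 0 with rfl | hs
  · simp
  · rw [Gamma_add_one hs, mul_inv, mul_inv_cancel_left₀ hs]

lemma rpow_mul_exp_neg_le_Gamma {M s : ℝ} (hM : 0 ≤ M) (hs : 1 ≤ s) :
    M ^ (s - 1) * exp (-M) ≤ Gamma s := by
  have hΓint := GammaIntegral_convergent (zero_lt_one.trans_le hs)
  have htail : Set.Ioi M ⊆ Set.Ioi 0 := Set.Ioi_subset_Ioi hM
  calc M ^ (s - 1) * exp (-M) = ∫ x in Set.Ioi M, M ^ (s - 1) * exp (-x) := by
        rw [integral_const_mul, integral_exp_neg_Ioi]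
    _ ≤ ∫ x in Set.Ioi M, exp (-x) * x ^ (s - 1) := by
        refine setIntegral_mono_on ((integrableOn_exp_neg_Ioi M).const_mul _)
          (hΓint.mono_set htail) measurableSet_Ioi fun x hx => ?_
        rw [mul_comm]
        gcongr
        exact le_of_lt hx
    _ ≤ ∫ x in Set.Ioi 0, exp (-x) * x ^ (s - 1) := by
        refine setIntegral_mono_set hΓint ?_ htail.eventuallyLE
        exact ae_restrict_of_forall_mem measurableSet_Ioi fun x hx =>
          mul_nonneg (exp_pos _).le (rpow_nonneg (le_of_lt hx) _)
    _ = Gamma s := (Gamma_eq_integral (zero_lt_one.trans_le hs)).symm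

lemma integral_sub_rpow_mul_rpow_s18 {p q t : ℝ} (hp : 0 < p) (hq : 0 < q) (ht : 0 < t) :
    ∫ u in (0 : ℝ)..t, (t - u) ^ (q - 1) * u ^ (p - 1)
      = t ^ (p + q - 1) * (Gamma p * Gamma q / Gamma (p + q)) := by
  have hcomplex := Complex.betaIntegral_scaled (p : ℂ) (q : ℂ) ht
  rw [Complex.betaIntegral_eq_Gamma_mul_div _ _ (by simpa) (by simpa)] at hcomplex
  rw [← Complex.ofReal_inj, ← intervalIntegral.integral_ofReal]
  calc ∫ u in (0 : ℝ)..t, (((t - u) ^ (q - 1) * u ^ (p - 1) : ℝ) : ℂ)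
      = ∫ u in (0 : ℝ)..t, (u : ℂ) ^ ((p : ℂ) - 1) * ((t : ℂ) - u) ^ ((q : ℂ) - 1) := by
        refine intervalIntegral.integral_congr fun u hu => ?_
        rw [Set.uIcc_of_le ht.le] at hu
        simp only [Complex.ofReal_mul, Complex.ofReal_cpow (sub_nonneg.2 hu.2),
          Complex.ofReal_cpow hu.1, Complex.ofReal_sub, Complex.ofReal_one, mul_comm]
    _ = _ := by
        rw [hcomplex]
        simp only [Complex.ofReal_mul, Complex.ofReal_div, Complex.ofReal_cpow ht.le,
          ← Complex.Gamma_ofReal, Complex.ofReal_sub, Complex.ofReal_add, Complex.ofReal_one]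

lemma intervalIntegrable_sub_rpow_mul_rpow {p q t : ℝ} (hp : 0 < p) (hq : 0 < q) (ht : 0 < t) :
    IntervalIntegrable (fun u => (t - u) ^ (q - 1) * u ^ (p - 1)) volume 0 t := by
  -- A non-integrable function would have integral `0`, whereas the Beta integral is positive.
  refine not_imp_comm.1 intervalIntegral.integral_undef ?_
  rw [integral_sub_rpow_mul_rpow_s18 hp hq ht]
  exact (mul_pos (rpow_pos_of_pos ht _) (ProbabilityTheory.beta_pos hp hq)).ne'

lemma hasSum_integral_sub_rpow_mul_tsum_rpow {ι : Type*} [Countable ι] {a p : ι → ℝ} {q t : ℝ}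
    (hp : ∀ i, 0 < p i) (hq : 0 < q) (ht : 0 < t)
    (hsum : Summable fun i =>
      |a i| * (t ^ (p i + q - 1) * (Gamma (p i) * Gamma q / Gamma (p i + q)))) :
    HasSum (fun i => a i * (t ^ (p i + q - 1) * (Gamma (p i) * Gamma q / Gamma (p i + q))))
      (∫ u in (0 : ℝ)..t, (t - u) ^ (q - 1) * ∑' i, a i * u ^ (p i - 1)) := by
  let F (i : ι) (u : ℝ) : ℝ := a i * ((t - u) ^ (q - 1) * u ^ (p i - 1))
  have hF_integrable (i : ι) : IntegrableOn (F i) (Set.Ioc 0 t) :=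
    ((intervalIntegrable_iff_integrableOn_Ioc_of_le ht.le).1
      (intervalIntegrable_sub_rpow_mul_rpow (hp i) hq ht)).const_mul _
  have hintegral (b : ℝ) (i : ι) :
      ∫ u in Set.Ioc 0 t, b * ((t - u) ^ (q - 1) * u ^ (p i - 1))
        = b * (t ^ (p i + q - 1) * (Gamma (p i) * Gamma q / Gamma (p i + q))) := by
    rw [integral_const_mul, ← intervalIntegral.integral_of_le ht.le,
      integral_sub_rpow_mul_rpow_s18 (hp i) hq ht]
  have hF_norm (i : ι) : ∫ u in Set.Ioc 0 t, ‖F i u‖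
      = |a i| * (t ^ (p i + q - 1) * (Gamma (p i) * Gamma q / Gamma (p i + q))) := by
    rw [← hintegral]
    refine setIntegral_congr_fun measurableSet_Ioc fun u hu => ?_
    have hkernel : 0 ≤ (t - u) ^ (q - 1) * u ^ (p i - 1) :=
      mul_nonneg (rpow_nonneg (sub_nonneg.2 hu.2) _) (rpow_nonneg hu.1.le _)
    exact (norm_mul _ _).trans (congrArg _ (norm_of_nonneg hkernel))
  have hF_tsum (u : ℝ) :
      (t - u) ^ (q - 1) * ∑' i, a i * u ^ (p i - 1) = ∑' i, F i u := by
    rw [← tsum_mul_left]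
    exact tsum_congr fun i => mul_left_comm _ _ _
  simp only [intervalIntegral.integral_of_le ht.le, hF_tsum, ← hintegral]
  exact hasSum_integral_of_summable_integral_norm hF_integrable 
    (hsum.congr fun i => (hF_norm i).symm)

end Gamma

section MittagLeffler

variable {α : ℝ}

lemma summable_pow_div_Gamma (hα : 0 < α) (β x : ℝ) :
    Summable fun k : ℕ => x ^ k / Gamma (α * k + β) := by
  -- `M ^ α` has to exceed the ratio `|x|` of the numerators for a geometric majorant to arise.
  set M : ℝ := (|x| + 1) ^ α⁻¹
  have hM0 : 0 < M := by positivity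
  have hMα : M ^ α = |x| + 1 := rpow_inv_rpow (by positivity) hα.ne'
  have hgeometric : Summable fun k : ℕ => (|x| / (|x| + 1)) ^ k / (M ^ (β - 1) * exp (-M)) :=
    (summable_geometric_of_lt_one (by positivity)
      ((div_lt_one (by positivity)).2 (lt_add_one _))).div_const _
  refine hgeometric.of_norm_bounded_eventually_nat ?_
  have hlarge : ∀ᶠ k : ℕ in Filter.atTop, 1 - β ≤ α * k :=
    (tendsto_natCast_atTop_atTop.const_mul_atTop hα).eventually_ge_atTop _
  filter_upwards [hlarge] with k hk
  have hΓ : (|x| + 1) ^ k * (M ^ (β - 1) * exp (-M)) ≤ Gamma (α * k + β) := by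
    calc (|x| + 1) ^ k * (M ^ (β - 1) * exp (-M)) = M ^ (α * k + β - 1) * exp (-M) := by
          rw [add_sub_assoc, rpow_add hM0, rpow_mul hM0.le, hMα, rpow_natCast, mul_assoc]
      _ ≤ Gamma (α * k + β) := rpow_mul_exp_neg_le_Gamma hM0.le (by linarith)
  rw [norm_div, norm_pow, norm_eq_abs, div_pow, div_div]
  gcongr
  exact hΓ.trans (le_abs_self _)

lemma mittagLeffler_eq_inv_Gamma_add (hα : 0 < α) (β x : ℝ) :
    mittagLeffler α β x = (Gamma β)⁻¹ + x * mittagLeffler α (α + β) x := by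
  rw [mittagLeffler, (summable_pow_div_Gamma hα β x).tsum_eq_zero_add, mittagLeffler,
    ← tsum_mul_left]
  congr 1
  · simp
  · refine tsum_congr fun k => ?_
    rw [Nat.cast_add_one, mul_add_one, add_assoc, pow_succ', mul_div_assoc]

lemma hasSum_natCast_mul_pow_div_Gamma (hα : 0 < α) (β x : ℝ) :
    HasSum (fun k : ℕ => α * k * x ^ k / Gamma (α * k + β))
      (mittagLeffler α (β - 1) x - (β - 1) * mittagLeffler α β x) := by
  refine ((summable_pow_div_Gamma hα (β - 1) x).hasSum.sub
    ((summable_pow_div_Gamma hα β x).hasSum.mul_left (β - 1))).congr_fun fun k => ?_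
  have hΓ := inv_Gamma_eq_mul_inv_Gamma_add_one (α * k + (β - 1))
  rw [add_assoc, sub_add_cancel] at hΓ
  rw [div_eq_mul_inv _ (Gamma (α * k + (β - 1))), hΓ]
  ring

lemma hasDerivAt_mittagLeffler (hα : 0 < α) (β x : ℝ) :
    HasDerivAt (mittagLeffler α β) (∑' k : ℕ, k * x ^ (k - 1) / Gamma (α * k + β)) x := by
  set R : ℝ := |x| + 1
  have hR : 0 < R := by positivity
  have hbound : Summable fun k : ℕ => ‖k * R ^ (k - 1) / Gamma (α * k + β)‖ := by
    refine ((hasSum_natCast_mul_pow_div_Gamma hα β R).summable.mul_left (α * R)⁻¹).norm.congr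
      fun k => congrArg norm ?_
    rcases k with _ | k
    · simp
    · rw [Nat.add_sub_cancel, pow_succ]
      field_simp
  have hterm (k : ℕ) (y : ℝ) : HasDerivAt (fun z => z ^ k / Gamma (α * k + β))
      (k * y ^ (k - 1) / Gamma (α * k + β)) y := (hasDerivAt_pow k y).div_const _
  have hle (k : ℕ) (y : ℝ) (hy : y ∈ Metric.ball 0 R) :
      ‖k * y ^ (k - 1) / Gamma (α * k + β)‖ ≤ ‖k * R ^ (k - 1) / Gamma (α * k + β)‖ := by
    have hyR : ‖y‖ ≤ ‖R‖ := (mem_ball_zero_iff.1 hy).le.trans (le_abs_self R)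
    simp only [norm_div, norm_mul, norm_pow]
    gcongr
  exact hasDerivAt_tsum_of_isPreconnected hbound Metric.isOpen_ball
    (convex_ball 0 R).isPreconnected (fun k y _ => hterm k y) hle (Metric.mem_ball_self hR)
    (summable_pow_div_Gamma hα β 0) (mem_ball_zero_iff.2 (lt_add_one |x|))

lemma mul_deriv_mittagLeffler (hα : 0 < α) (β x : ℝ) :
    α * x * deriv (mittagLeffler α β) x
      = mittagLeffler α (β - 1) x - (β - 1) * mittagLeffler α β x := by
  rw [(hasDerivAt_mittagLeffler hα β x).deriv, ← tsum_mul_left,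
    ← (hasSum_natCast_mul_pow_div_Gamma hα β x).tsum_eq]
  refine tsum_congr fun k => ?_
  rcases k with _ | k
  · simp
  · rw [Nat.add_sub_cancel, pow_succ]
    ring

end MittagLeffler

/-- The function `t ↦ t^(β-1) E_{α,β}(c t^α)` in terms of which solutions of linear fractional
differential equations are expressed. Since `Real.Gamma` is `0` at its poles, the terms with
`1 / Γ(αk+β) = 0` are correct for every real `β`. -/
noncomputable def mittagLefflerKernel (α β c t : ℝ) : ℝ :=
  t ^ (β - 1) * mittagLeffler α β (c * t ^ α)

/-- The Caputo derivative `ᶜ₀D_t^α v` of order `α ∈ (0, 1)`; meaningful when `v` is differentiable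
on `(0, t)`. -/
noncomputable def caputoDeriv (α : ℝ) (v : ℝ → ℝ) (t : ℝ) : ℝ :=
  1 / Gamma (1 - α) * ∫ u in (0 : ℝ)..t, (t - u) ^ (-α) * deriv v u

section Kernel

variable {α t : ℝ}

lemma mittagLefflerKernel_eq_add (hα : 0 < α) (β c : ℝ) (ht : 0 < t) :
    mittagLefflerKernel α β c t
      = t ^ (β - 1) / Gamma β + c * mittagLefflerKernel α (α + β) c t := by
  rw [mittagLefflerKernel, mittagLefflerKernel, mittagLeffler_eq_inv_Gamma_add hα, add_sub_assoc,
    rpow_add ht]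
  ring

lemma mittagLefflerKernel_zero (hα : 0 < α) (c : ℝ) (ht : 0 < t) :
    mittagLefflerKernel α 0 c t = c * mittagLefflerKernel α α c t := by
  rw [mittagLefflerKernel_eq_add hα 0 c ht, Gamma_zero, div_zero, zero_add, add_zero]

lemma mittagLefflerKernel_one (hα : 0 < α) (c : ℝ) (ht : 0 < t) :
    mittagLefflerKernel α 1 c t = 1 + c * mittagLefflerKernel α (α + 1) c t := by
  rw [mittagLefflerKernel_eq_add hα 1 c ht, sub_self, rpow_zero, Gamma_one, div_one]

lemma hasDerivAt_mittagLefflerKernel (hα : 0 < α) (β c : ℝ) (ht : 0 < t) :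
    HasDerivAt (mittagLefflerKernel α β c) (mittagLefflerKernel α (β - 1) c t) t := by
  have hinner : HasDerivAt (fun s : ℝ => c * s ^ α) (c * (α * t ^ (α - 1))) t :=
    (hasDerivAt_rpow_const (Or.inl ht.ne')).const_mul c
  have houter := (hasDerivAt_mittagLeffler hα β (c * t ^ α)).differentiableAt.hasDerivAt
  refine ((hasDerivAt_rpow_const (Or.inl ht.ne')).mul (houter.comp t hinner)).congr_deriv ?_
  have hpow : t ^ (β - 1) * t ^ (α - 1) = t ^ (β - 1 - 1) * t ^ α := by
    rw [← rpow_add ht, ← rpow_add ht]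
    ring_nf
  rw [mittagLefflerKernel, Function.comp_apply]
  linear_combination t ^ (β - 1 - 1) * mul_deriv_mittagLeffler hα β (c * t ^ α)
    + c * α * deriv (mittagLeffler α β) (c * t ^ α) * hpow

lemma hasSum_mittagLefflerKernel (hα : 0 < α) (β c : ℝ) (ht : 0 < t) :
    HasSum (fun k : ℕ => c ^ k / Gamma (α * k + β) * t ^ (α * k + β - 1))
      (mittagLefflerKernel α β c t) := by
  refine ((summable_pow_div_Gamma hα β (c * t ^ α)).hasSum.mul_left (t ^ (β - 1))).congr_fun
    fun k => ?_
  rw [add_sub_assoc, rpow_add ht, rpow_mul ht.le, rpow_natCast]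
  ring

lemma integral_sub_rpow_mul_mittagLefflerKernel {β μ : ℝ} (hα : 0 < α) (hβ : 0 < β) (hμ : 0 < μ)
    (c : ℝ) (ht : 0 < t) :
    ∫ u in (0 : ℝ)..t, (t - u) ^ (μ - 1) * mittagLefflerKernel α β c u
      = Gamma μ * mittagLefflerKernel α (β + μ) c t := by
  have hp (k : ℕ) : 0 < α * k + β := by positivity
  have hterm (a : ℝ) (k : ℕ) : a ^ k / Gamma (α * k + β) * (t ^ (α * k + β + μ - 1) *
        (Gamma (α * k + β) * Gamma μ / Gamma (α * k + β + μ)))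
      = Gamma μ * (a ^ k / Gamma (α * k + (β + μ)) * t ^ (α * k + (β + μ) - 1)) := by
    have hΓ := (Gamma_pos_of_pos (hp k)).ne'
    rw [← add_assoc]
    field_simp
  have hseries (a : ℝ) := (hasSum_mittagLefflerKernel hα (β + μ) a ht).mul_left (Gamma μ)
  have htermwise := hasSum_integral_sub_rpow_mul_tsum_rpow
    (a := fun k : ℕ => c ^ k / Gamma (α * k + β)) hp hμ ht (by
      simpa only [abs_div, abs_pow, abs_of_pos (Gamma_pos_of_pos (hp _)), hterm]
        using (hseries |c|).summable)
  simp only [hterm] at htermwise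
  rw [← htermwise.unique (hseries c)]
  refine intervalIntegral.integral_congr_Ioo_of_le ht.le fun u hu => ?_
  simp only [(hasSum_mittagLefflerKernel hα β c hu.1).tsum_eq]

lemma caputoDeriv_eq_of_hasDerivAt_mittagLefflerKernel {β σ a c : ℝ} {v : ℝ → ℝ} (hα : 0 < α)
    (hβ : 0 < β) (hσ : σ < 1) (ht : 0 < t)
    (hv : ∀ u ∈ Set.Ioo 0 t, HasDerivAt v (a * mittagLefflerKernel α β c u) u) :
    caputoDeriv σ v t = a * mittagLefflerKernel α (β + (1 - σ)) c t := by
  have hσ' : 0 < 1 - σ := sub_pos.2 hσ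
  have hintegral : ∫ u in (0 : ℝ)..t, (t - u) ^ (-σ) * deriv v u
      = a * (Gamma (1 - σ) * mittagLefflerKernel α (β + (1 - σ)) c t) := by
    rw [← integral_sub_rpow_mul_mittagLefflerKernel hα hβ hσ' c ht,
      ← intervalIntegral.integral_const_mul, sub_sub_cancel_left]
    refine intervalIntegral.integral_congr_Ioo_of_le ht.le fun u hu => ?_
    simp only [(hv u hu).deriv, mul_left_comm]
  have hΓ := (Gamma_pos_of_pos hσ').ne'
  rw [caputoDeriv, hintegral]
  field_simp

end Kernel

theorem fractional_free_fall_general {α g b m v₀ : ℝ} {v : ℝ → ℝ} (hα0 : 0 < α) (hα1 : α < 1)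
    (hm : m ≠ 0)
    (hv : ∀ t : ℝ, 0 < t → v t
      = g * t ^ α * mittagLeffler α (α + 1) (-(b / m) * t ^ α)
        + v₀ * mittagLeffler α 1 (-(b / m) * t ^ α)) :
    (∀ t : ℝ, 0 < t → DifferentiableAt ℝ v t) ∧
      ∀ t : ℝ, 0 < t → m * caputoDeriv α v t = m * g - b * v t := by
  set c : ℝ := -(b / m)
  have hv_kernel : ∀ t, 0 < t → v t
      = g * mittagLefflerKernel α (α + 1) c t + v₀ * mittagLefflerKernel α 1 c t := fun t ht => by
    rw [hv t ht, mittagLefflerKernel, mittagLefflerKernel, add_sub_cancel_right, sub_self,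
      rpow_zero, one_mul, mul_assoc]
  have hv_deriv : ∀ t, 0 < t →
      HasDerivAt v ((g + c * v₀) * mittagLefflerKernel α α c t) t := fun t ht => by
    refine ((((hasDerivAt_mittagLefflerKernel hα0 (α + 1) c ht).const_mul g).add
      ((hasDerivAt_mittagLefflerKernel hα0 1 c ht).const_mul v₀)).congr_of_eventuallyEq
      (Filter.eventually_of_mem (Ioi_mem_nhds ht) hv_kernel)).congr_deriv ?_
    rw [add_sub_cancel_right, sub_self, mittagLefflerKernel_zero hα0 c ht]
    ring
  refine ⟨fun t ht => (hv_deriv t ht).differentiableAt, fun t ht => ?_⟩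
  have hcaputo : caputoDeriv α v t = g + c * v t := by
    rw [caputoDeriv_eq_of_hasDerivAt_mittagLefflerKernel hα0 hα0 hα1 ht
      fun u hu => hv_deriv u hu.1, add_sub_cancel, hv_kernel t ht]
    linear_combination g * mittagLefflerKernel_one hα0 c ht
  rw [hcaputo, mul_add, ← mul_assoc, mul_neg, mul_div_cancel₀ b hm, neg_mul, sub_eq_add_neg]

/-- Solution of the fractional free-fall equation with air resistance:
`v(t) = g t^α E_{α,α+1}(-(b/m) t^α) + v₀ E_α(-(b/m) t^α)` (with `v 0 = v₀`)
is differentiable on `(0,∞)` and satisfies the Caputo fractional equation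
`m · (1/Γ(1-α)) ∫_0^t (t-u)^{-α} v'(u) du = m g − b v(t)` for all `t > 0`. -/
theorem fractional_free_fall
    (α g b m v₀ : ℝ) (hα0 : 0 < α) (hα1 : α < 1)
    (hg : 0 < g) (hb : 0 < b) (hm : 0 < m)
    (v : ℝ → ℝ)
    (hv : ∀ t : ℝ, v t
      = g * t ^ α * mittagLeffler α (α + 1) (-(b / m) * t ^ α)
        + v₀ * mittagLeffler α 1 (-(b / m) * t ^ α))
    (hv0 : v 0 = v₀) :
    (∀ t : ℝ, 0 < t → DifferentiableAt ℝ v t) ∧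
      ∀ t : ℝ, 0 < t →
        m * ((1 / Real.Gamma (1 - α)) *
            ∫ u in (0:ℝ)..t, (t - u) ^ (-α) * deriv v u)
          = m * g - b * v t :=
  fractional_free_fall_general hα0 hα1 hm.ne' fun t _ => hv t
end
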